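/- arXiv:0709.1398 — 5 statements merged into one kernel-verified Lean document; each statement's English description precedes it below -/
import Mathlib

section
/- Let f be a homeomorphism of the complex plane ℂ with f(0) = 0. Suppose that f is locally topologically conjugate to one of the following maps: z ↦ z/2, z ↦ 2z, or z ↦ e^{2πip/q}·z·(1 + z^{qr}) for some integers p, q, r with q ≥ 1 and r ≥ 1. Then f satisfies the short trip property. -/
/-!
Each model map has a local Lyapunov function: a real function on a neighbourhood `V` of 0, bounded
on `V \ W` for each neighbourhood `W` of 0, that drops by at least 1 at each step. Its total drop
along an orbit segment with endpoints outside `W` is then bounded in terms of `W`, and so is the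
length of the segment
(`shortTrip_of_hasLyapunov`). Lyapunov functions can be transported by local conjugacies
(`HasLyapunov.of_locallyConj`).

For `z / 2` and `2 * z` the function is `± log ‖z‖ / log 2`. For the parabolic map put `m = q r`;
since `exp (2 π i p / q) ^ m = 1`, the coordinate `w = z ^ m` evolves by `w ↦ w (1 + w) ^ m`, and
`u = 1 / w` by `u ↦ u - m + o(1)`, so `2 * Re u` is a Lyapunov function (`hasLyapunov_parabolic`).
-/

open Topology Filter Set

noncomputable section

/-- A topological closed disc: a subset of ℂ homeomorphic to the closed unit disc. -/
def IsTopDisc (D : Set ℂ) : Prop :=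
  Nonempty (D ≃ₜ (Metric.closedBall (0:ℂ) 1 : Set ℂ))

/-- A sequence of subsets of ℂ converges to 0: every neighbourhood of 0 contains
all but finitely many of the sets. -/
def SetsTendToZero (E : ℕ → Set ℂ) : Prop :=
  ∀ W ∈ 𝓝 (0:ℂ), ∀ᶠ n in Filter.atTop, E n ⊆ W

/-- `V` is a neighbourhood of 0 witnessing the short trip property for `f`:
any segment of orbit contained in `V` whose endpoints are outside `W` has
length bounded by a constant depending only on `W`. -/
def WitnessesShortTrip (f : ℂ ≃ₜ ℂ) (V : Set ℂ) : Prop :=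
  V ∈ 𝓝 (0:ℂ) ∧
    ∀ W ∈ 𝓝 (0:ℂ), ∃ N : ℕ, 0 < N ∧
      ∀ (x : ℂ) (n : ℕ),
        (∀ k ≤ n, (f : ℂ → ℂ)^[k] x ∈ V) → x ∉ W → (f : ℂ → ℂ)^[n] x ∉ W → n ≤ N

/-- The short trip property for a homeomorphism `f` of the plane fixing 0. -/
def ShortTrip (f : ℂ ≃ₜ ℂ) : Prop := ∃ V, WitnessesShortTrip f V

/-- `f` is locally topologically conjugate to `g` at the fixed point 0. -/
def LocallyConj (f g : ℂ → ℂ) : Prop :=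
  ∃ φ : ℂ ≃ₜ ℂ, φ 0 = 0 ∧ ∃ U ∈ 𝓝 (0:ℂ), ∀ z ∈ U, φ (f z) = g (φ z)

/-- The stable set `W^s(V)` of points whose forward orbit stays in `V`. -/
def Ws (f : ℂ ≃ₜ ℂ) (V : Set ℂ) : Set ℂ := {x | ∀ n : ℕ, (f : ℂ → ℂ)^[n] x ∈ V}

/-- The unstable set `W^u(V)` of points whose backward orbit stays in `V`. -/
def Wu (f : ℂ ≃ₜ ℂ) (V : Set ℂ) : Set ℂ := {x | ∀ n : ℕ, (f.symm : ℂ → ℂ)^[n] x ∈ V}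

/-- ℤ-indexed iterates of a homeomorphism. -/
def zIter (f : ℂ ≃ₜ ℂ) : ℤ → ℂ → ℂ
  | (n : ℕ) => (f : ℂ → ℂ)^[n]
  | (Int.negSucc n) => (f.symm : ℂ → ℂ)^[n + 1]

/-- An invariant petal: a topological closed disc with 0 on its frontier,
globally invariant under `f`. -/
def IsInvariantPetal (f : ℂ ≃ₜ ℂ) (P : Set ℂ) : Prop :=
  IsTopDisc P ∧ (0:ℂ) ∈ frontier P ∧ f '' P = P

/-- A regular invariant petal: every compact subset of `P \ {0}` has its
forward iterates converging to 0. -/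
def IsRegularPetal (f : ℂ ≃ₜ ℂ) (P : Set ℂ) : Prop :=
  IsInvariantPetal f P ∧
    ∀ K ⊆ P \ {0}, IsCompact K → SetsTendToZero (fun n => (f : ℂ → ℂ)^[n] '' K)

/-- An attracting sector for `f`. -/
def IsAttractingSector (f : ℂ ≃ₜ ℂ) (S : Set ℂ) : Prop :=
  IsTopDisc S ∧ (0:ℂ) ∈ frontier S ∧ (∃ V ∈ 𝓝 (0:ℂ), S ∩ V = (f '' S) ∩ V) ∧
    SetsTendToZero (fun n => (f : ℂ → ℂ)^[n] '' S)

/-- A nice attracting sector for `f`. -/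
def IsNiceAttractingSector (f : ℂ ≃ₜ ℂ) (S : Set ℂ) : Prop :=
  IsAttractingSector f S ∧ f '' S ⊆ S ∧ IsConnected (S \ f '' S)

/-- A nice repulsive sector is a nice attracting sector for the inverse. -/
def IsNiceRepulsiveSector (f : ℂ ≃ₜ ℂ) (S : Set ℂ) : Prop :=
  IsNiceAttractingSector f.symm S

/-- A nice disc for `f` with parameter `ℓ ≥ 1`: a topological closed disc,
neighbourhood of 0, whose maximal invariant set is a union of `2ℓ` regular
invariant petals with pairwise intersections `{0}`, the traces of the petals
on `∂D` being connected and in the cyclic order of the indices, and such that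
the connected component of `D` minus the petals between two consecutive petals
has closure a nice attracting (odd index) or repulsive (even index) sector. -/
def IsNiceDisc (f : ℂ ≃ₜ ℂ) (ℓ : ℕ) (D : Set ℂ) : Prop :=
  IsTopDisc D ∧ D ∈ 𝓝 (0:ℂ) ∧
  ∃ P : ZMod (2*ℓ) → Set ℂ,
    (∀ i, IsRegularPetal f (P i)) ∧
    (∀ i j, i ≠ j → P i ∩ P j = {0}) ∧
    ({x : ℂ | ∀ n : ℤ, zIter f n x ∈ D} = ⋃ i, P i) ∧
    (∀ i, IsConnected (frontier D ∩ P i)) ∧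
    (∃ γ : ℝ → ℂ, Continuous γ ∧ (∀ t, γ (t + 2*ℓ) = γ t) ∧
      Set.InjOn γ (Set.Ico 0 (2*ℓ : ℝ)) ∧ γ '' (Set.Ico 0 (2*ℓ : ℝ)) = frontier D ∧
      ∀ k : Fin (2*ℓ),
        frontier D ∩ P ((k : ℕ) : ZMod (2*ℓ)) ⊆ γ '' Set.Icc ((k:ℕ) : ℝ) ((k:ℕ) + 1)) ∧
    (∀ i : ZMod (2*ℓ), ∃ z ∈ D \ ⋃ j, P j,
      (closure (connectedComponentIn (D \ ⋃ j, P j) z) ∩ (P i \ {0})).Nonempty ∧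
      (closure (connectedComponentIn (D \ ⋃ j, P j) z) ∩ (P (i+1) \ {0})).Nonempty) ∧
    (∀ i : ZMod (2*ℓ), ∀ z ∈ D \ ⋃ j, P j,
      (closure (connectedComponentIn (D \ ⋃ j, P j) z) ∩ (P i \ {0})).Nonempty →
      (closure (connectedComponentIn (D \ ⋃ j, P j) z) ∩ (P (i+1) \ {0})).Nonempty →
      (Odd (ZMod.val i) →
        IsNiceAttractingSector f (closure (connectedComponentIn (D \ ⋃ j, P j) z))) ∧
      (Even (ZMod.val i) →
        IsNiceRepulsiveSector f (closure (connectedComponentIn (D \ ⋃ j, P j) z))))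

/-- `g` has a local Lyapunov function at 0: a real function `L` on a neighbourhood `V` of 0 which
drops by at least 1 at each step starting in `V \ {0}` and is bounded on `V` away from 0. The value
`L 0` is irrelevant. -/
def HasLyapunov (g : ℂ → ℂ) : Prop :=
  ∃ V ∈ 𝓝 (0:ℂ), ∃ L : ℂ → ℝ, (∀ z ∈ V, z ≠ 0 → L (g z) ≤ L z - 1) ∧
    ∀ W ∈ 𝓝 (0:ℂ), ∃ C : ℝ, ∀ z ∈ V, z ∉ W → |L z| ≤ C

/-- If `|L| ≤ C` at both ends of a trip and `L` drops by 1 at each step, the trip has length at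
most `2 * C`. -/
lemma shortTrip_of_hasLyapunov (f : ℂ ≃ₜ ℂ) (hf : f 0 = 0) (h : HasLyapunov f) : ShortTrip f := by
  obtain ⟨V, hV, L, hL, hC⟩ := h
  refine ⟨V, hV, fun W hW => ?_⟩
  obtain ⟨C, hC⟩ := hC W hW
  obtain ⟨N, hN⟩ := exists_nat_gt (2 * C)
  refine ⟨N + 1, Nat.succ_pos _, fun x n hx hxW hnW => ?_⟩
  have hx0 : x ≠ 0 := fun h0 => hxW (h0 ▸ mem_of_mem_nhds hW)
  -- Injectivity of `f` keeps the orbit away from the fixed point.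
  have hne : ∀ k, (f : ℂ → ℂ)^[k] x ≠ 0 := by
    intro k
    rw [← Function.iterate_fixed hf k]
    exact (f.injective.iterate k).ne hx0
  have key : ∀ k ≤ n, L ((f : ℂ → ℂ)^[k] x) ≤ L x - k := by
    intro k
    induction k with
    | zero => simp
    | succ k ih =>
      intro hk
      have h1 := hL _ (hx k (by omega)) (hne k)
      have h2 := ih (by omega)
      rw [Function.iterate_succ_apply']
      push_cast
      linarith
  have h1 := key n le_rfl
  have h2 := abs_le.mp (hC x (hx 0 (Nat.zero_le _)) hxW)
  have h3 := abs_le.mp (hC _ (hx n le_rfl) hnW)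
  have : (n : ℝ) ≤ N := by linarith [h2.2, h3.1]
  have : n ≤ N := by exact_mod_cast this
  omega

lemma HasLyapunov.of_locallyConj {f g : ℂ → ℂ} (h : LocallyConj f g) (hg : HasLyapunov g) :
    HasLyapunov f := by
  obtain ⟨φ, hφ, U, hU, hconj⟩ := h
  obtain ⟨V, hV, L, hL, hC⟩ := hg
  have hpre : φ ⁻¹' V ∈ 𝓝 (0:ℂ) := φ.continuous.continuousAt.preimage_mem_nhds (by rwa [hφ])
  refine ⟨U ∩ φ ⁻¹' V, inter_mem hU hpre, L ∘ φ, fun z hz hz0 => ?_, fun W hW => ?_⟩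
  · have h0 : φ z ≠ 0 := by
      rw [← hφ]
      exact φ.injective.ne hz0
    simpa [hconj z hz.1] using hL (φ z) hz.2 h0
  · have hs : φ.symm 0 = 0 := by simpa only [hφ] using φ.symm_apply_apply 0
    have hW' : φ.symm ⁻¹' W ∈ 𝓝 (0:ℂ) :=
      φ.symm.continuous.continuousAt.preimage_mem_nhds (by rwa [hs])
    obtain ⟨C, hC⟩ := hC _ hW'
    exact ⟨C, fun z hz hzW => hC (φ z) hz.2 (by simpa using hzW)⟩

lemma abs_log_norm_bounded (W : Set ℂ) (hW : W ∈ 𝓝 (0:ℂ)) :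
    ∃ C : ℝ, ∀ z ∈ Metric.ball (0:ℂ) 1, z ∉ W → |Real.log ‖z‖ / Real.log 2| ≤ C := by
  obtain ⟨ε, hε, hball⟩ := Metric.mem_nhds_iff.mp hW
  refine ⟨-Real.log ε / Real.log 2, fun z hz hzW => ?_⟩
  have h2 : 0 < Real.log 2 := Real.log_pos one_lt_two
  have hz1 : ‖z‖ < 1 := by simpa using hz
  have hz2 : ε ≤ ‖z‖ := by
    by_contra! hlt
    exact hzW (hball (by simpa using hlt))
  have h3 : Real.log ‖z‖ ≤ 0 := Real.log_nonpos (norm_nonneg _) hz1.le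
  rw [abs_div, abs_of_pos h2, abs_of_nonpos h3]
  gcongr

lemma hasLyapunov_half : HasLyapunov (fun z : ℂ => z / 2) := by
  refine ⟨_, Metric.ball_mem_nhds 0 one_pos, fun z => Real.log ‖z‖ / Real.log 2,
    fun z _ hz0 => ?_, abs_log_norm_bounded⟩
  have h2 : Real.log 2 ≠ 0 := (Real.log_pos one_lt_two).ne'
  simp only [norm_div, Complex.norm_ofNat]
  rw [Real.log_div (norm_ne_zero_iff.mpr hz0) two_ne_zero, sub_div, div_self h2]

lemma hasLyapunov_double : HasLyapunov (fun z : ℂ => 2 * z) := by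
  refine ⟨_, Metric.ball_mem_nhds 0 one_pos, fun z => -(Real.log ‖z‖ / Real.log 2),
    fun z _ hz0 => ?_, ?_⟩
  · have h2 : Real.log 2 ≠ 0 := (Real.log_pos one_lt_two).ne'
    simp only [norm_mul, Complex.norm_ofNat]
    rw [Real.log_mul two_ne_zero (norm_ne_zero_iff.mpr hz0), add_div, div_self h2]
    linarith
  · simpa only [abs_neg] using abs_log_norm_bounded

/-- In the coordinate `u = 1 / w`, the map `w ↦ w (1 + w) ^ m` is `u ↦ u - m + o(1)` near `u = ∞`,
so it moves `u` to the left by at least `1 / 2`. -/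
lemma eventually_re_inv_drop (m : ℕ) (hm : 1 ≤ m) :
    ∀ᶠ w in 𝓝[≠] (0:ℂ), ((w * (1 + w) ^ m)⁻¹).re ≤ (w⁻¹).re - 1 / 2 := by
  have hd : HasDerivAt (fun w : ℂ => ((1 + w) ^ m)⁻¹) (-(m:ℂ)) 0 := by
    have h1 : HasDerivAt (fun w : ℂ => (1 + w) ^ m) (m : ℂ) 0 := by
      simpa using ((hasDerivAt_id (0:ℂ)).const_add 1).fun_pow m
    simpa using h1.fun_inv (by simp)
  have ht := (Complex.continuous_re.tendsto _).comp hd.tendsto_slope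
  have hlt : (-(m:ℂ)).re < -(1 / 2) := by
    have : (1:ℝ) ≤ m := by exact_mod_cast hm
    simp only [Complex.neg_re, Complex.natCast_re]
    linarith
  filter_upwards [ht.eventually (gt_mem_nhds hlt)] with w hw
  have he : slope (fun w : ℂ => ((1 + w) ^ m)⁻¹) 0 w = (w * (1 + w) ^ m)⁻¹ - w⁻¹ := by
    simp only [slope, vsub_eq_sub, sub_zero, add_zero, one_pow, inv_one, smul_eq_mul, mul_inv]
    ring
  simp only [Function.comp_apply, he, Complex.sub_re] at hw
  linarith

lemma hasLyapunov_parabolic (c : ℂ) (m : ℕ) (hm : 1 ≤ m) (hc : c ^ m = 1) :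
    HasLyapunov (fun z : ℂ => c * z * (1 + z ^ m)) := by
  have hm0 : m ≠ 0 := by omega
  have hpow : Tendsto (fun z : ℂ => z ^ m) (𝓝[≠] 0) (𝓝[≠] 0) := by
    refine tendsto_nhdsWithin_iff.mpr ⟨?_, ?_⟩
    · have := (continuous_pow m (M := ℂ)).tendsto 0
      rw [zero_pow hm0] at this
      exact this.mono_left nhdsWithin_le_nhds
    · filter_upwards [self_mem_nhdsWithin] with z hz
      exact pow_ne_zero m hz
  have hev := eventually_nhdsWithin_iff.mp (hpow.eventually (eventually_re_inv_drop m hm))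
  refine ⟨_, hev, fun z => 2 * ((z ^ m)⁻¹).re, fun z hz hz0 => ?_, fun W hW => ?_⟩
  · have h1 := hz hz0
    have h2 : (c * z * (1 + z ^ m)) ^ m = z ^ m * (1 + z ^ m) ^ m := by
      rw [mul_pow, mul_pow, hc, one_mul]
    simp only [h2]
    linarith
  · obtain ⟨ε, hε, hball⟩ := Metric.mem_nhds_iff.mp hW
    refine ⟨2 * (ε ^ m)⁻¹, fun z _ hzW => ?_⟩
    have hz2 : ε ≤ ‖z‖ := by
      by_contra! hlt
      exact hzW (hball (by simpa using hlt))
    rw [abs_mul, abs_two]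
    gcongr
    refine (Complex.abs_re_le_norm _).trans ?_
    rw [norm_inv, norm_pow]
    gcongr

/-- a homeomorphism of the plane fixing 0 which is locally
topologically conjugate to the contraction `z ↦ z/2`, the dilatation `z ↦ 2z`,
or a parabolic model `z ↦ e^{2πip/q} z (1 + z^{qr})` satisfies the short trip
property. -/
theorem stmt_0 (f : ℂ ≃ₜ ℂ) (hf : f 0 = 0)
    (h : LocallyConj f (fun z : ℂ => z / 2) ∨ LocallyConj f (fun z : ℂ => 2 * z) ∨
      ∃ (p q r : ℤ), 1 ≤ q ∧ 1 ≤ r ∧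
        LocallyConj f
          (fun z : ℂ => Complex.exp (2 * Real.pi * Complex.I * p / q) * z * (1 + z ^ (q * r)))) :
    ShortTrip f := by
  refine shortTrip_of_hasLyapunov f hf ?_
  rcases h with h | h | ⟨p, q, r, hq, hr, h⟩
  · exact .of_locallyConj h hasLyapunov_half
  · exact .of_locallyConj h hasLyapunov_double
  · obtain ⟨a, rfl⟩ := Int.eq_ofNat_of_zero_le (show 0 ≤ q by omega)
    obtain ⟨b, rfl⟩ := Int.eq_ofNat_of_zero_le (show 0 ≤ r by omega)
    have ha : 1 ≤ a := by omega
    have hb : 1 ≤ b := by omega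
    have ha0 : (a : ℂ) ≠ 0 := by
      exact_mod_cast (show a ≠ 0 by omega)
    have hc : Complex.exp (2 * Real.pi * Complex.I * p / ((a : ℤ) : ℂ)) ^ (a * b) = 1 := by
      rw [pow_mul, ← Complex.exp_nat_mul, Int.cast_natCast, mul_div_cancel₀ _ ha0,
        mul_comm _ (p : ℂ), Complex.exp_int_mul_two_pi_mul_I, one_pow]
    have hg := hasLyapunov_parabolic _ (a * b) (Nat.mul_pos ha hb) hc
    refine .of_locallyConj h ?_
    have he : ∀ z : ℂ, z ^ ((a : ℤ) * (b : ℤ)) = z ^ (a * b) := fun z => by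
      rw [← Nat.cast_mul, zpow_natCast]
    simpa only [he] using hg
end
end

section
/- Let f and g be homeomorphisms of ℂ with f(0) = g(0) = 0, and suppose there exist a homeomorphism φ of ℂ with φ(0) = 0 and a neighbourhood U of 0 such that φ(f(z)) = g(φ(z)) for all z ∈ U. If f satisfies the short trip property, then g satisfies the short trip property. -/
/-!
The homeomorphism `φ` carries an orbit segment of `f` that stays in `U` to an orbit segment of `g`.
If `V` witnesses the short trip property for `f`, then `φ (V ∩ U)` witnesses it for `g`: an orbit
segment of `g` inside `φ (V ∩ U)` pulls back to an orbit segment of `f` inside `V ∩ U`, and its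
endpoints lie outside `W` exactly when the endpoints pulled back lie outside `φ⁻¹ W`, so that the
bound given by `f` for `φ⁻¹ W` serves for `W`.
-/

open Topology Filter Set

noncomputable section

/-- While the `g`-orbit of `x` pulls back into the domain `U` of the conjugacy, `φ.symm` sends it
to the `f`-orbit of `φ.symm x`. -/
theorem iterate_symm_of_conj {f g φ : ℂ ≃ₜ ℂ} {U : Set ℂ} (hconj : ∀ z ∈ U, φ (f z) = g (φ z))
    {x : ℂ} {n : ℕ} (hx : ∀ k < n, φ.symm ((g : ℂ → ℂ)^[k] x) ∈ U) :
    (f : ℂ → ℂ)^[n] (φ.symm x) = φ.symm ((g : ℂ → ℂ)^[n] x) := by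
  induction n with
  | zero => rfl
  | succ m ih =>
    rw [Function.iterate_succ_apply', Function.iterate_succ_apply',
      ih fun k hk => hx k (hk.trans m.lt_succ_self), ← φ.symm_apply_apply (f _),
      hconj _ (hx m m.lt_succ_self), φ.apply_symm_apply]

/-- the short trip property is invariant under local topological
conjugacy. -/
theorem stmt_4 (f g : ℂ ≃ₜ ℂ) (hf : f 0 = 0) (hg : g 0 = 0)
    (φ : ℂ ≃ₜ ℂ) (hφ : φ 0 = 0) (U : Set ℂ) (hU : U ∈ 𝓝 (0:ℂ))
    (hconj : ∀ z ∈ U, φ (f z) = g (φ z))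
    (h : ShortTrip f) : ShortTrip g := by
  obtain ⟨V, hV, hshort⟩ := h
  have hsymm : φ.symm 0 = 0 := φ.symm_apply_eq.2 hφ.symm
  refine ⟨φ.symm ⁻¹' (V ∩ U), φ.symm.continuous.continuousAt.preimage_mem_nhds ?_, fun W hW => ?_⟩
  · rw [hsymm]
    exact inter_mem hV hU
  obtain ⟨N, hN, hbound⟩ := hshort (φ ⁻¹' W)
    (φ.continuous.continuousAt.preimage_mem_nhds (by rwa [hφ]))
  refine ⟨N, hN, fun x n horb hxW hnW => ?_⟩
  have hiter : ∀ k ≤ n, (f : ℂ → ℂ)^[k] (φ.symm x) = φ.symm ((g : ℂ → ℂ)^[k] x) :=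
    fun k hk => iterate_symm_of_conj hconj fun j hj => (horb j (hj.le.trans hk)).2
  refine hbound (φ.symm x) n (fun k hk => ?_) ?_ ?_
  · rw [hiter k hk]
    exact (horb k hk).1
  · simpa using hxW
  · rw [hiter n le_rfl]
    simpa using hnW
end
end

section
/- Let f be a homeomorphism of ℂ with f(0) = 0 and let V be a neighbourhood of 0 witnessing the short trip property for f. Then for every compact set K ⊆ W^s(V) ∖ {0}, the sequence of images (f^n(K))_{n≥0} converges to 0. -/
open Topology Filter Set

noncomputable section

/-- if `V` witnesses the short trip property for `f`, then for every
compact `K ⊆ W^s(V) \ {0}` the sequence `(f^n(K))` converges to 0. -/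
theorem stmt_5 (f : ℂ ≃ₜ ℂ) (hf : f 0 = 0) (V : Set ℂ)
    (hV : WitnessesShortTrip f V)
    (K : Set ℂ) (hK : IsCompact K) (hKsub : K ⊆ Ws f V \ {0}) :
    SetsTendToZero (fun n => (f : ℂ → ℂ)^[n] '' K) := by
  intro W hW
  -- Shrinking `W` to avoid `K` makes every point of `K` a legitimate start of a trip outside it.
  have hKc : Kᶜ ∈ 𝓝 (0:ℂ) :=
    hK.isClosed.isOpen_compl.mem_nhds fun h => (hKsub h).2 rfl
  obtain ⟨N, -, hN⟩ := hV.2 (W ∩ Kᶜ) (inter_mem hW hKc)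
  filter_upwards [eventually_gt_atTop N] with n hn
  rintro _ ⟨x, hx, rfl⟩
  by_contra hxW
  exact absurd (hN x n (fun k _ => (hKsub hx).1 k) (fun h => h.2 hx) fun h => hxW h.1)
    (not_le.mpr hn)
end
end

section
/- Let f be a homeomorphism of ℂ with f(0) = 0 and let V be an open neighbourhood of 0 witnessing the short trip property for f. Then the set W^s(V) ∖ {0} is open in ℂ, and likewise the set W^u(V) ∖ {0} is open in ℂ. -/
/-!
Let `x ≠ 0` have its forward orbit in `V`, and let `W` be the trace of `f⁻¹(V)` on a ball around `0`
of radius `‖x‖ / 2`, with `N` the bound attached to `W` by the short trip property. Points `y` near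
`x` are outside `W` and follow `x` inside `V` up to time `N + 1`. From then on they cannot leave `V`:
if the orbit of `y` is in `V` up to a time `n > N`, the short trip property forces `fⁿ(y) ∈ W`,
hence `fⁿ⁺¹(y) ∈ V`. The unstable case is the stable case for `f⁻¹`, since reversing orbit
segments shows that `V` also witnesses the short trip property for `f⁻¹`.
-/

open Topology Filter Set

noncomputable section

/-- The short trip property is symmetric under time reversal: an orbit segment of `f.symm`, read
backwards, is an orbit segment of `f` with the two endpoints exchanged. -/
theorem WitnessesShortTrip.symm {f : ℂ ≃ₜ ℂ} {V : Set ℂ} (hV : WitnessesShortTrip f V) :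
    WitnessesShortTrip f.symm V := by
  refine ⟨hV.1, fun W hW => ?_⟩
  obtain ⟨N, hN, h⟩ := hV.2 W hW
  refine ⟨N, hN, fun x n hk hx hn => ?_⟩
  have key : ∀ k ≤ n, (f : ℂ → ℂ)^[k] ((f.symm : ℂ → ℂ)^[n] x) = (f.symm : ℂ → ℂ)^[n - k] x := by
    intro k hkn
    obtain ⟨m, rfl⟩ := Nat.exists_eq_add_of_le hkn
    rw [Function.iterate_add_apply, Nat.add_sub_cancel_left]
    exact Function.LeftInverse.iterate (g := f) (f := f.symm) f.apply_symm_apply k _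
  refine h ((f.symm : ℂ → ℂ)^[n] x) n (fun k hkn => ?_) hn ?_
  · rw [key k hkn]
    exact hk _ (Nat.sub_le n k)
  · rw [key n le_rfl, Nat.sub_self]
    exact hx

theorem isOpen_Ws_diff_zero (f : ℂ ≃ₜ ℂ) (hf : f 0 = 0) (V : Set ℂ) (hVopen : IsOpen V)
    (hV : WitnessesShortTrip f V) : IsOpen (Ws f V \ {0}) := by
  rw [isOpen_iff_mem_nhds]
  rintro x ⟨hx, hx0⟩
  have hxpos : 0 < ‖x‖ := norm_pos_iff.mpr hx0
  have hW : f ⁻¹' V ∩ Metric.ball 0 (‖x‖ / 2) ∈ 𝓝 (0:ℂ) :=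
    inter_mem (f.continuous.continuousAt.preimage_mem_nhds (hf.symm ▸ hV.1))
      (Metric.ball_mem_nhds _ (half_pos hxpos))
  obtain ⟨N, -, h⟩ := hV.2 _ hW
  have hnear : ∀ᶠ y in 𝓝 x, ∀ k ∈ Set.Iic (N + 1), (f : ℂ → ℂ)^[k] y ∈ V := by
    rw [Filter.eventually_all_finite (Set.finite_Iic _)]
    intro k _
    exact (f.continuous.iterate k).continuousAt.eventually_mem (hVopen.mem_nhds (hx k))
  have hfar : ∀ᶠ y in 𝓝 x, ‖x‖ / 2 < ‖y‖ :=
    continuous_norm.continuousAt.eventually_const_lt (half_lt_self hxpos)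
  filter_upwards [hnear, hfar] with y hyV hy
  have hyW : y ∉ f ⁻¹' V ∩ Metric.ball 0 (‖x‖ / 2) := fun hmem =>
    absurd (mem_ball_zero_iff.mp hmem.2) hy.not_gt
  have hstay : ∀ n, ∀ k ≤ n, (f : ℂ → ℂ)^[k] y ∈ V := by
    intro n
    induction n with
    | zero => exact fun k hk => hyV k (hk.trans (Nat.zero_le _))
    | succ n ih =>
      intro k hk
      rcases Nat.le_succ_iff.mp hk with hk | rfl
      · exact ih k hk
      by_cases hn : n ≤ N
      · exact hyV _ (Nat.succ_le_succ hn)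
      -- A trip in `V` longer than `N` ends in `W`, so its next step is still in `V`.
      · have hmem := not_not.mp fun hnW => hn (h y n ih hyW hnW)
        rw [Function.iterate_succ_apply']
        exact hmem.1
  refine ⟨fun n => hstay n n le_rfl, ?_⟩
  exact norm_pos_iff.mp ((half_pos hxpos).trans hy)

/-- if the open set `V` witnesses the short trip property for `f`,
then `W^s(V) \ {0}` and `W^u(V) \ {0}` are open. -/
theorem stmt_6 (f : ℂ ≃ₜ ℂ) (hf : f 0 = 0) (V : Set ℂ) (hVopen : IsOpen V)
    (hV : WitnessesShortTrip f V) :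
    IsOpen (Ws f V \ {0}) ∧ IsOpen (Wu f V \ {0}) := by
  exact ⟨isOpen_Ws_diff_zero f hf V hVopen hV,
    isOpen_Ws_diff_zero f.symm (f.symm_apply_eq.mpr hf.symm) V hVopen hV.symm⟩
end
end

section
/- Let f be a homeomorphism of ℂ with f(0) = 0 and let V be a neighbourhood of 0 witnessing the short trip property for f. Then the set W^s(V) ∪ W^u(V) is a neighbourhood of 0. -/
/-! Suppose `x` lies in neither `Ws f V` nor `Wu f V`. Its orbit then leaves `V` both forwards and
backwards; let `f^q x` and `f^(-p) x` be the last points of the orbit before these exits. Both lie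
outside the neighbourhood `W = f⁻¹(V) ∩ f(V)` of `0`, so the short trip property bounds the length
`p + q` of the orbit segment joining them by a constant `N = N(W)`. But if `x` is close enough
to `0`, continuity keeps `x, f x, …, f^(N+1) x` in `V`, so that `q > N`. -/

open Topology Filter Set

noncomputable section

/-- Here `p` is the last time before the first exit of the forward `g`-orbit from `V`. -/
lemma exists_last_before_exit {g : ℂ → ℂ} {V : Set ℂ} {x : ℂ} (hx : x ∈ V)
    (h : ∃ n, g^[n] x ∉ V) : ∃ p, (∀ k ≤ p, g^[k] x ∈ V) ∧ g^[p + 1] x ∉ V := by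
  by_contra! H
  obtain ⟨n, hn⟩ := h
  apply hn
  induction n using Nat.strong_induction_on with
  | _ n ih =>
    cases n with
    | zero => exact hx
    | succ n => exact H n fun k hk => by_contra fun hk' => hk' (ih k (by omega) hk')

/-- if `V` witnesses the short trip property for `f`, then
`W^s(V) ∪ W^u(V)` is a neighbourhood of 0. -/
theorem stmt_7 (f : ℂ ≃ₜ ℂ) (hf : f 0 = 0) (V : Set ℂ)
    (hV : WitnessesShortTrip f V) :
    Ws f V ∪ Wu f V ∈ 𝓝 (0:ℂ) := by
  obtain ⟨hV0, hS⟩ := hV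
  have hf' : f.symm 0 = 0 := by rw [Homeomorph.symm_apply_eq, hf]
  have hit : ∀ n : ℕ, (f : ℂ → ℂ)^[n] 0 = 0 := fun n => Function.iterate_fixed hf n
  have hW : (f ⁻¹' V) ∩ (f.symm ⁻¹' V) ∈ 𝓝 (0:ℂ) :=
    inter_mem (f.continuous.continuousAt.preimage_mem_nhds (by rwa [hf]))
      (f.symm.continuous.continuousAt.preimage_mem_nhds (by rwa [hf']))
  obtain ⟨N, -, hN⟩ := hS _ hW
  have hU : ∀ᶠ x in 𝓝 (0:ℂ), ∀ k ∈ Set.Iic (N + 1), (f : ℂ → ℂ)^[k] x ∈ V := by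
    rw [Filter.eventually_all_finite (Set.finite_Iic _)]
    intro k _
    exact (f.continuous.iterate k).continuousAt.preimage_mem_nhds (by rwa [hit])
  filter_upwards [hU] with x hxU
  by_contra hx
  simp only [Set.mem_union, Ws, Wu, Set.mem_ofPred_eq, not_or, not_forall] at hx
  have hx0 : x ∈ V := hxU 0 (Set.mem_Iic.2 (Nat.zero_le _))
  obtain ⟨q, hq, hq'⟩ := exists_last_before_exit hx0 hx.1
  obtain ⟨p, hp, hp'⟩ := exists_last_before_exit hx0 hx.2
  have hqN : N < q := by
    by_contra hle
    exact hq' (hxU (q + 1) (Set.mem_Iic.2 (by omega)))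
  have hcancel : ∀ k, (f : ℂ → ℂ)^[k] ((f.symm : ℂ → ℂ)^[k] x) = x := fun k =>
    (Function.LeftInverse.iterate f.apply_symm_apply k) x
  -- The orbit segment starts at `y = f^(-p) x`.
  have hlow : ∀ k ≤ p, (f : ℂ → ℂ)^[k] ((f.symm : ℂ → ℂ)^[p] x) = (f.symm : ℂ → ℂ)^[p - k] x := by
    intro k hk
    obtain ⟨j, rfl⟩ := Nat.exists_eq_add_of_le hk
    rw [Function.iterate_add_apply, Nat.add_sub_cancel_left]
    exact (Function.LeftInverse.iterate f.apply_symm_apply k) _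
  have hhigh : ∀ j, (f : ℂ → ℂ)^[j + p] ((f.symm : ℂ → ℂ)^[p] x) = (f : ℂ → ℂ)^[j] x := by
    intro j
    rw [Function.iterate_add_apply, hcancel]
  have hle := hN ((f.symm : ℂ → ℂ)^[p] x) (q + p) ?_ ?_ ?_
  · omega
  · intro k hk
    rcases le_total k p with h | h
    · rw [hlow k h]
      exact hp _ (Nat.sub_le _ _)
    · obtain ⟨j, rfl⟩ := Nat.exists_eq_add_of_le' h
      rw [hhigh]
      exact hq j (by omega)
  · intro h
    exact hp' (by rw [Function.iterate_succ_apply']; exact h.2)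
  · rw [hhigh]
    intro h
    exact hq' (by rw [Function.iterate_succ_apply']; exact h.1)
end
end
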